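/- (RD identification, Hahn–Todd–van der Klaauw.) Let (Ω, ℱ, μ) be a probability space, V : Ω → ℝ measurable, ξ ∈ ℝ, O(0) and O(1) integrable real-valued random variables, D = 𝟙{V ≥ ξ}, and O = D·O(1) + (1 − D)·O(0). Suppose m₀, m₁ : ℝ → ℝ are Borel functions with m_d ∘ V equal μ-a.e. to the conditional expectation of O(d) given the σ-algebra generated by V, for d ∈ {0,1}, and suppose m₀ and m₁ are continuous at ξ (RD-continuity). Define m : ℝ → ℝ by m(v) = m₁(v) if v ≥ ξ and m(v) = m₀(v) if v < ξ. Then: (a) m ∘ V equals μ-a.e. the conditional expectation of O given the σ-algebra generated by V; and (b) m(v) tends to m₁(ξ) as v → ξ from the right and to m₀(ξ) as v → ξ from the left, so lim_{v→ξ⁺} m(v) − lim_{v→ξ⁻} m(v) = m₁(ξ) − m₀(ξ), which is the RD causal estimand τ_RD = E[O(1) − O(0) | V = ξ] computed from the continuous versions m₀, m₁. -/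

import Mathlib

open MeasureTheory Filter

/-- RD identification, Hahn–Todd–van der Klaauw: with running variable
`V`, cutoff `ξ`, treatment `D = 𝟙{V ≥ ξ}`, observed outcome
`O = D·O(1) + (1 − D)·O(0)`, and Borel versions `m₀, m₁` of the conditional-mean
functions `v ↦ E[O(d) | V = v]` that are continuous at `ξ`, the function
`m(v) = m₁(v)` for `v ≥ ξ` and `m₀(v)` for `v < ξ` is a version of `v ↦ E[O | V = v]`,
and `m` tends to `m₁(ξ)` from the right of `ξ` and to `m₀(ξ)` from the left, so the
jump of the observed regression function at `ξ` is `m₁(ξ) − m₀(ξ) = τ_RD`. -/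
theorem rd_identification
    {Ω : Type*} [MeasurableSpace Ω] (μ : Measure Ω) [IsProbabilityMeasure μ]
    (V : Ω → ℝ) (hV : Measurable V) (ξ : ℝ)
    (O0 O1 : Ω → ℝ) (hO0 : Integrable O0 μ) (hO1 : Integrable O1 μ)
    (O : Ω → ℝ)
    (hO : ∀ ω, O ω =
      (if ξ ≤ V ω then (1 : ℝ) else 0) * O1 ω +
        (1 - (if ξ ≤ V ω then (1 : ℝ) else 0)) * O0 ω)
    (m0 m1 : ℝ → ℝ) (hm0 : Measurable m0) (hm1 : Measurable m1)
    (hv0 : (fun ω => m0 (V ω)) =ᵐ[μ] μ[O0 | MeasurableSpace.comap V (borel ℝ)])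
    (hv1 : (fun ω => m1 (V ω)) =ᵐ[μ] μ[O1 | MeasurableSpace.comap V (borel ℝ)])
    (hc0 : ContinuousAt m0 ξ) (hc1 : ContinuousAt m1 ξ)
    (m : ℝ → ℝ) (hm : ∀ v, m v = if ξ ≤ v then m1 v else m0 v) :
    ((fun ω => m (V ω)) =ᵐ[μ] μ[O | MeasurableSpace.comap V (borel ℝ)]) ∧
      Tendsto m (nhdsWithin ξ (Set.Ioi ξ)) (nhds (m1 ξ)) ∧
      Tendsto m (nhdsWithin ξ (Set.Iio ξ)) (nhds (m0 ξ)) := by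
  have hS : MeasurableSet[MeasurableSpace.comap V (borel ℝ)] (V ⁻¹' Set.Ici ξ) :=
    ⟨Set.Ici ξ, by rw [← BorelSpace.measurable_eq (α := ℝ)]; exact measurableSet_Ici, rfl⟩
  have hS' : MeasurableSet (V ⁻¹' Set.Ici ξ) := hV measurableSet_Ici
  have hOeq : O = (V ⁻¹' Set.Ici ξ).indicator O1 + (V ⁻¹' Set.Ici ξ)ᶜ.indicator O0 := by
    funext ω
    by_cases h : ξ ≤ V ω <;> simp [hO, Set.indicator, h]
  refine ⟨?_, ?_, ?_⟩
  · have h1 := condExp_indicator hO1 hS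
    have h0 := condExp_indicator hO0 hS.compl
    have ha := condExp_add (hO1.indicator hS') (hO0.indicator hS'.compl)
      (MeasurableSpace.comap V (borel ℝ))
    rw [hOeq]
    filter_upwards [h1, h0, ha, hv0, hv1] with ω e1 e0 ea f0 f1
    rw [ea, Pi.add_apply, e1, e0, hm]
    by_cases h : ξ ≤ V ω <;> simp [Set.indicator, h, ← f0, ← f1]
  · refine (hc1.tendsto.mono_left nhdsWithin_le_nhds).congr' ?_
    filter_upwards [self_mem_nhdsWithin] with v hv
    rw [hm, if_pos (le_of_lt hv)]
  · refine (hc0.tendsto.mono_left nhdsWithin_le_nhds).congr' ?_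
    filter_upwards [self_mem_nhdsWithin] with v hv
    rw [hm, if_neg (not_le.mpr hv)]
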